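/- Let n and s be relatively prime integers with 2 ≤ n < s, and write s = n·m + k with m ≥ 1 and 1 ≤ k ≤ n−1. Then in the braid group B_n the element δ^s is conjugate to δ·(U_2U_3⋯U_n)^m·U_{a_1}·⋯·U_{a_{k−1}}, where a_i = ⌈n·i/k⌉ for 1 ≤ i ≤ k−1 (the product U_{a_1}⋯U_{a_{k−1}} being the empty product 1 when k = 1). -/

import Mathlib

/-- The braid relations on `m` generators (so that `σ_1, …, σ_m` present the braid
group `B_{m+1}`); generator `i : Fin m` corresponds to `σ_{i+1}`. -/
def braidRels (m : ℕ) : Set (FreeGroup (Fin m)) :=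
  {r | ∃ i j : Fin m, (i.val + 2 ≤ j.val ∨ j.val + 2 ≤ i.val) ∧
        r = FreeGroup.of i * FreeGroup.of j * (FreeGroup.of i)⁻¹ * (FreeGroup.of j)⁻¹}
  ∪ {r | ∃ i j : Fin m, (i.val + 1 = j.val ∨ j.val + 1 = i.val) ∧
        r = FreeGroup.of i * FreeGroup.of j * FreeGroup.of i *
            (FreeGroup.of j * FreeGroup.of i * FreeGroup.of j)⁻¹}

/-- The braid group `B n` on `n` strands, presented with generators `σ_1, …, σ_{n-1}`. -/
abbrev BraidGroup (n : ℕ) : Type := PresentedGroup (braidRels (n - 1))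

namespace BraidGroup

/-- The Artin generator `σ_i` of `B n` for `1 ≤ i ≤ n - 1` (junk value `1` otherwise). -/
def σ (n i : ℕ) : BraidGroup n :=
  if h : 1 ≤ i ∧ i ≤ n - 1 then PresentedGroup.of (⟨i - 1, by omega⟩ : Fin (n - 1)) else 1

/-- `D n k = σ_{k-1} ⋯ σ_2 σ_1` in `B n`; `D n 1 = 1`. -/
def D (n k : ℕ) : BraidGroup n :=
  (((List.range (k - 1)).reverse).map (fun j => σ n (j + 1))).prod

/-- `E n k = σ_1 σ_2 ⋯ σ_{k-1}` in `B n`; `E n 1 = 1`. -/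
def E (n k : ℕ) : BraidGroup n :=
  ((List.range (k - 1)).map (fun j => σ n (j + 1))).prod

/-- `U n k = D n k * E n k` in `B n`; `U n 1 = 1`. -/
def U (n k : ℕ) : BraidGroup n := D n k * E n k

/-- `δ = σ_{n-1} σ_{n-2} ⋯ σ_1` in `B n`. -/
def delta (n : ℕ) : BraidGroup n := D n n

/-- `Δ = σ_1 (σ_2 σ_1) ⋯ (σ_{n-1} ⋯ σ_1) = D_2 D_3 ⋯ D_n` in `B n`. -/
def Delta (n : ℕ) : BraidGroup n :=
  ((List.range (n - 1)).map (fun j => D n (j + 2))).prod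

end BraidGroup

namespace BraidGroup

/-! ### Generators and runs of generators -/

theorem σ_commute (n : ℕ) {i j : ℕ} (h : i + 2 ≤ j) : Commute (σ n i) (σ n j) := by
  unfold σ
  split_ifs with hi hj
  · have hrel : FreeGroup.of (⟨i - 1, by omega⟩ : Fin (n - 1)) *
        FreeGroup.of (⟨j - 1, by omega⟩ : Fin (n - 1)) *
        (FreeGroup.of (⟨i - 1, by omega⟩ : Fin (n - 1)))⁻¹ *
        (FreeGroup.of (⟨j - 1, by omega⟩ : Fin (n - 1)))⁻¹ ∈ braidRels (n - 1) :=
      Or.inl ⟨_, _, Or.inl (by simp only; omega), rfl⟩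
    have h1 := PresentedGroup.one_of_mem hrel
    simp only [map_mul, map_inv] at h1
    exact mul_inv_eq_iff_eq_mul.1 (mul_inv_eq_one.1 h1)
  · exact Commute.one_right _
  · exact Commute.one_left _
  · exact Commute.one_left _

theorem σ_braid {n i : ℕ} (h1 : 1 ≤ i) (h2 : i + 1 ≤ n - 1) :
    σ n i * σ n (i + 1) * σ n i = σ n (i + 1) * σ n i * σ n (i + 1) := by
  unfold σ
  rw [dif_pos ⟨h1, by omega⟩, dif_pos ⟨by omega, h2⟩]
  have hrel : FreeGroup.of (⟨i - 1, by omega⟩ : Fin (n - 1)) *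
      FreeGroup.of (⟨i + 1 - 1, by omega⟩ : Fin (n - 1)) *
      FreeGroup.of (⟨i - 1, by omega⟩ : Fin (n - 1)) *
      (FreeGroup.of (⟨i + 1 - 1, by omega⟩ : Fin (n - 1)) *
      FreeGroup.of (⟨i - 1, by omega⟩ : Fin (n - 1)) *
      FreeGroup.of (⟨i + 1 - 1, by omega⟩ : Fin (n - 1)))⁻¹ ∈ braidRels (n - 1) :=
    Or.inr ⟨_, _, Or.inl (by simp only; omega), rfl⟩
  have h := PresentedGroup.one_of_mem hrel
  simp only [map_mul, map_inv] at h
  exact mul_inv_eq_one.1 h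

/-- The ascending run `σ_r σ_{r+1} ⋯ σ_{r+c-1}`. -/
def asc (n r : ℕ) : ℕ → BraidGroup n
  | 0 => 1
  | c + 1 => asc n r c * σ n (r + c)

/-- The descending run `σ_{r+c-1} ⋯ σ_{r+1} σ_r`. -/
def desc (n r : ℕ) : ℕ → BraidGroup n
  | 0 => 1
  | c + 1 => σ n (r + c) * desc n r c

theorem E_succ (n c : ℕ) : E n (c + 1) = asc n 1 c := by
  induction c with
  | zero => rfl
  | succ c ih =>
    rw [asc, ← ih]
    simp [E, List.range_succ, add_comm]

theorem D_succ (n c : ℕ) : D n (c + 1) = desc n 1 c := by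
  induction c with
  | zero => rfl
  | succ c ih =>
    rw [desc, ← ih]
    simp [D, List.range_succ, add_comm]

theorem U_succ (n c : ℕ) : U n (c + 1) = desc n 1 c * asc n 1 c := by
  rw [U, D_succ, E_succ]

theorem desc_add (n r c d : ℕ) : desc n r (c + d) = desc n (r + c) d * desc n r c := by
  induction d with
  | zero => simp [desc]
  | succ d ih => rw [← add_assoc, desc, ih, desc, mul_assoc, add_assoc]

theorem commute_asc {n r c : ℕ} {g : BraidGroup n}
    (h : ∀ i, r ≤ i → i < r + c → Commute g (σ n i)) : Commute g (asc n r c) := by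
  induction c with
  | zero => exact Commute.one_right _
  | succ c ih =>
    exact (ih fun i h1 h2 => h i h1 (by omega)).mul_right (h _ (by omega) (by omega))

theorem commute_desc {n r c : ℕ} {g : BraidGroup n}
    (h : ∀ i, r ≤ i → i < r + c → Commute g (σ n i)) : Commute g (desc n r c) := by
  induction c with
  | zero => exact Commute.one_right _
  | succ c ih =>
    exact (h _ (by omega) (by omega)).mul_right (ih fun i h1 h2 => h i h1 (by omega))

theorem desc_mul_σ {n c i : ℕ} (hc : c ≤ n - 1) (hi : 1 ≤ i) (hic : i + 1 ≤ c) :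
    desc n 1 c * σ n (i + 1) = σ n i * desc n 1 c := by
  induction c with
  | zero => omega
  | succ c ih =>
    rcases Nat.lt_or_ge i c with h | h
    · rw [desc, mul_assoc, ih (by omega) (by omega), ← mul_assoc, ← mul_assoc,
        ← (σ_commute n (show i + 2 ≤ 1 + c by omega)).eq]
    · obtain ⟨d, rfl⟩ : ∃ d, i = d + 1 := ⟨i - 1, by omega⟩
      obtain rfl : c = d + 1 := by omega
      have hcomm : Commute (σ n (d + 1 + 1)) (desc n 1 d) :=
        commute_desc fun j _ h2 => (σ_commute n (by omega)).symm
      have hb := σ_braid (n := n) (i := d + 1) (by omega) (by omega)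
      simp only [desc, add_comm 1]
      rw [mul_assoc, mul_assoc, ← hcomm.eq]
      simp only [← mul_assoc]
      rw [hb]

theorem asc_mul_σ {n c i : ℕ} (hc : c ≤ n - 1) (hi : 1 ≤ i) (hic : i + 1 ≤ c) :
    asc n 1 c * σ n i = σ n (i + 1) * asc n 1 c := by
  induction c with
  | zero => omega
  | succ c ih =>
    rcases Nat.lt_or_ge i c with h | h
    · rw [asc, mul_assoc, ← (σ_commute n (show i + 2 ≤ 1 + c by omega)).eq, ← mul_assoc,
        ih (by omega) (by omega), mul_assoc]
    · obtain ⟨d, rfl⟩ : ∃ d, i = d + 1 := ⟨i - 1, by omega⟩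
      obtain rfl : c = d + 1 := by omega
      have hcomm : Commute (σ n (d + 1 + 1)) (asc n 1 d) :=
        commute_asc fun j _ h2 => (σ_commute n (by omega)).symm
      have hb := σ_braid (n := n) (i := d + 1) (by omega) (by omega)
      simp only [asc, add_comm 1]
      rw [← mul_assoc, ← mul_assoc, hcomm.eq, mul_assoc, mul_assoc, mul_assoc, mul_assoc,
        ← mul_assoc, ← mul_assoc, ← mul_assoc (σ n (d + 1 + 1)), ← hb]
      simp only [mul_assoc]

/-- `δ σ_{r+1} ⋯ σ_{r+c} = σ_r ⋯ σ_{r+c-1} δ`. -/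
theorem desc_mul_asc {n N r c : ℕ} (hN : N ≤ n - 1) (hr : 1 ≤ r) (h : r + c ≤ N) :
    desc n 1 N * asc n (r + 1) c = asc n r c * desc n 1 N := by
  induction c with
  | zero => simp [asc]
  | succ c ih =>
    rw [asc, asc, ← mul_assoc, ih (by omega), mul_assoc, mul_assoc,
      show r + 1 + c = r + c + 1 by omega, desc_mul_σ hN (by omega) (by omega)]

theorem U_commute_σ {n c i : ℕ} (hc : c ≤ n - 1) (hi : 1 ≤ i) (hic : i + 1 ≤ c) :
    Commute (U n (c + 1)) (σ n i) := by
  rw [U_succ]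
  change _ * _ = _ * _
  rw [mul_assoc, asc_mul_σ hc hi hic, ← mul_assoc, desc_mul_σ hc hi hic, mul_assoc]

theorem U_commute {n a b : ℕ} (ha : a < n) (hb : b < n) :
    Commute (U n (a + 1)) (U n (b + 1)) := by
  have key : ∀ {a b : ℕ}, a < b → b < n → Commute (U n (b + 1)) (U n (a + 1)) := by
    intro a b hab hbn
    rw [U_succ n a]
    exact (commute_desc fun i h1 h2 => U_commute_σ (by omega) h1 (by omega)).mul_right
      (commute_asc fun i h1 h2 => U_commute_σ (by omega) h1 (by omega))
  rcases lt_trichotomy a b with h | rfl | h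
  · exact (key h hb).symm
  · exact Commute.refl _
  · exact key h ha

/-! ### Positive permutation braids -/

/-- The positive permutation braid of a sequence of integers, listed from the last position
to the first; only the relative order of the entries matters. -/
def permBraid (n : ℕ) : List ℤ → BraidGroup n
  | [] => 1
  | x :: l => asc n (l.length + 1 - l.countP (x < ·)) (l.countP (x < ·)) * permBraid n l

theorem commute_permBraid {n : ℕ} {g : BraidGroup n} (l : List ℤ)
    (h : ∀ i, 1 ≤ i → i < l.length → Commute g (σ n i)) : Commute g (permBraid n l) := by
  induction l with
  | nil => exact Commute.one_right _
  | cons x l ih =>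
    have hc : l.countP (x < ·) ≤ l.length := List.countP_le_length
    rw [List.length_cons] at h
    exact (commute_asc fun i h1 h2 => h i (by omega) (by omega)).mul_right
      (ih fun i h1 h2 => h i h1 (by omega))

theorem permBraid_map_add (n : ℕ) (t : ℤ) (l : List ℤ) :
    permBraid n (l.map (t + ·)) = permBraid n l := by
  induction l with
  | nil => rfl
  | cons x l ih =>
    have hc : (l.map (t + ·)).countP (t + x < ·) = l.countP (x < ·) := by
      rw [List.countP_map]
      congr 1
      ext y
      simp
    rw [List.map_cons, permBraid, permBraid, ih, hc, List.length_map]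

/-- Extracting the largest entry of a permutation braid. -/
theorem permBraid_insert_max (n : ℕ) (y : ℤ) (l₂ l₁ : List ℤ)
    (h₁ : ∀ x ∈ l₁, x < y) (h₂ : ∀ x ∈ l₂, x < y) :
    permBraid n (l₂ ++ y :: l₁) =
      permBraid n (l₂ ++ l₁) * desc n (l₁.length + 1) l₂.length := by
  induction l₂ with
  | nil =>
    have hc : l₁.countP (y < ·) = 0 := by
      rw [List.countP_eq_zero]
      intro x hx
      simpa using (h₁ x hx).le
    simp [permBraid, hc, asc, desc]
  | cons x l₂ ih =>
    have hx : x < y := h₂ x List.mem_cons_self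
    have hc : (l₂ ++ l₁).countP (x < ·) ≤ (l₂ ++ l₁).length := List.countP_le_length
    have hc1 : (l₂ ++ y :: l₁).countP (x < ·) = (l₂ ++ l₁).countP (x < ·) + 1 := by
      simp [List.countP_append, hx]; omega
    have hcomm : Commute (σ n (l₁.length + 1 + l₂.length)) (permBraid n (l₂ ++ l₁)) :=
      commute_permBraid _ fun i h1 h2 => (σ_commute n (by simp at h2; omega)).symm
    rw [List.cons_append, permBraid, ih fun z hz => h₂ z (List.mem_cons_of_mem _ hz), hc1,
      List.cons_append, permBraid, asc, List.length_cons, desc]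
    have hl : (l₂ ++ y :: l₁).length = (l₂ ++ l₁).length + 1 := by simp; omega
    have e1 : (l₂ ++ y :: l₁).length + 1 - ((l₂ ++ l₁).countP (x < ·) + 1) =
        (l₂ ++ l₁).length + 1 - (l₂ ++ l₁).countP (x < ·) := by omega
    have e2 : (l₂ ++ l₁).length + 1 - (l₂ ++ l₁).countP (x < ·) + (l₂ ++ l₁).countP (x < ·) =
        l₁.length + 1 + l₂.length := by simp at hc ⊢; omega
    rw [e1, e2]
    simp only [mul_assoc]
    rw [← mul_assoc (σ n _), hcomm.eq, mul_assoc]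

/-- Extracting the smallest entry of a permutation braid multiplied by `δ`. -/
theorem desc_mul_permBraid_insert_min {n N : ℕ} (hN : N ≤ n - 1) (x : ℤ) (l₂ l₁ : List ℤ)
    (h₁ : ∀ z ∈ l₁, x < z) (h₂ : ∀ z ∈ l₂, x < z) (hl : (l₂ ++ l₁).length ≤ N) :
    desc n 1 N * permBraid n (l₂ ++ x :: l₁) =
      permBraid n (l₂ ++ l₁) * (desc n 1 N * asc n 1 l₁.length) := by
  induction l₂ with
  | nil =>
    have hc : l₁.countP (x < ·) = l₁.length := by
      rw [List.countP_eq_length]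
      intro z hz
      simpa using h₁ z hz
    simp only [List.nil_append] at hl
    have hcomm : Commute (desc n 1 N * asc n 1 l₁.length) (permBraid n l₁) := by
      refine commute_permBraid _ fun i h1 h2 => ?_
      change _ * _ = _ * _
      rw [mul_assoc, asc_mul_σ (by omega) h1 (by omega), ← mul_assoc,
        desc_mul_σ hN h1 (by omega), mul_assoc]
    simp only [List.nil_append, permBraid, hc, Nat.add_sub_cancel_left]
    rw [← mul_assoc, hcomm.eq]
  | cons z l₂ ih =>
    have hz : x < z := h₂ z List.mem_cons_self
    have hc : (l₂ ++ l₁).countP (z < ·) ≤ (l₂ ++ l₁).length := List.countP_le_length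
    have hc1 : (l₂ ++ x :: l₁).countP (z < ·) = (l₂ ++ l₁).countP (z < ·) := by
      simp [List.countP_append, hz.le]
    rw [List.cons_append, List.length_cons] at hl
    have e1 : (l₂ ++ x :: l₁).length + 1 - (l₂ ++ l₁).countP (z < ·) =
        (l₂ ++ l₁).length + 1 - (l₂ ++ l₁).countP (z < ·) + 1 := by
      simp at hc ⊢; omega
    rw [List.cons_append, permBraid, hc1, e1, List.cons_append, permBraid, ← mul_assoc,
      desc_mul_asc hN (by omega) (by omega), mul_assoc,
      ih (fun w hw => h₂ w (List.mem_cons_of_mem _ hw)) (by omega), mul_assoc]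

theorem delta_eq_desc {n : ℕ} (hn : 1 ≤ n) : delta n = desc n 1 (n - 1) := by
  rw [← D_succ, Nat.sub_add_cancel hn, delta]

/-- Multiplying by `δ` turns the smallest entry into the largest one, at the cost of a `U`. -/
theorem delta_mul_permBraid {n : ℕ} (x y : ℤ) (l₂ l₁ : List ℤ)
    (hx₁ : ∀ z ∈ l₁, x < z) (hx₂ : ∀ z ∈ l₂, x < z)
    (hy₁ : ∀ z ∈ l₁, z < y) (hy₂ : ∀ z ∈ l₂, z < y) (hl : l₂.length + l₁.length + 1 = n) :
    delta n * permBraid n (l₂ ++ x :: l₁) =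
      permBraid n (l₂ ++ y :: l₁) * U n (l₁.length + 1) := by
  have hd : desc n 1 (n - 1) = desc n (l₁.length + 1) l₂.length * desc n 1 l₁.length := by
    rw [add_comm l₁.length 1, ← desc_add]
    congr 1
    omega
  rw [delta_eq_desc (by omega), desc_mul_permBraid_insert_min le_rfl x l₂ l₁ hx₁ hx₂
    (by simp; omega), permBraid_insert_max n y l₂ l₁ hy₁ hy₂, U_succ, hd]
  simp only [mul_assoc]

/-! ### Sequences of values -/

/-- The list `[f (N-1), …, f 1, f 0]`. -/
def values (f : ℕ → ℤ) : ℕ → List ℤ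
  | 0 => []
  | N + 1 => f N :: values f N

theorem length_values (f : ℕ → ℤ) (N : ℕ) : (values f N).length = N := by
  induction N with
  | zero => rfl
  | succ N ih => rw [values, List.length_cons, ih]

theorem mem_values {f : ℕ → ℤ} {N : ℕ} {z : ℤ} : z ∈ values f N ↔ ∃ j < N, f j = z := by
  induction N with
  | zero => simp [values]
  | succ N ih => rw [values, List.mem_cons, ih, Nat.exists_lt_succ_right, or_comm, eq_comm]

theorem values_congr {f g : ℕ → ℤ} {N : ℕ} (h : ∀ j < N, f j = g j) :
    values f N = values g N := by
  induction N with
  | zero => rfl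
  | succ N ih => rw [values, values, h N (by omega), ih fun j hj => h j (by omega)]

theorem values_add_const (t : ℤ) (f : ℕ → ℤ) (N : ℕ) :
    values (fun j => t + f j) N = (values f N).map (t + ·) := by
  induction N with
  | zero => rfl
  | succ N ih => rw [values, values, List.map_cons, ih]

theorem values_add (f : ℕ → ℤ) (a b : ℕ) :
    values f (a + b) = values (fun j => f (a + j)) b ++ values f a := by
  induction b with
  | zero => rfl
  | succ b ih => rw [← add_assoc, values, values, ih, List.cons_append]

theorem values_split (f : ℕ → ℤ) {b N : ℕ} (h : b < N) :
    values f N = values (fun j => f (b + 1 + j)) (N - (b + 1)) ++ f b :: values f b := by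
  conv_lhs => rw [show N = b + 1 + (N - (b + 1)) by omega, values_add, values]

theorem delta_mul_permBraid_values {n b : ℕ} (hb : b < n) {f g : ℕ → ℤ}
    (hfg : ∀ j < n, j ≠ b → f j = g j) (hmin : ∀ j < n, j ≠ b → f b < f j)
    (hmax : ∀ j < n, j ≠ b → g j < g b) :
    delta n * permBraid n (values f n) = permBraid n (values g n) * U n (b + 1) := by
  have e1 : values g b = values f b :=
    values_congr fun j hj => (hfg j (by omega) (by omega)).symm
  have e2 : values (fun j => g (b + 1 + j)) (n - (b + 1)) =
      values (fun j => f (b + 1 + j)) (n - (b + 1)) :=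
    values_congr fun j hj => (hfg _ (by omega) (by omega)).symm
  rw [values_split f hb, values_split g hb, e1, e2]
  have := delta_mul_permBraid (n := n) (f b) (g b)
    (values (fun j => f (b + 1 + j)) (n - (b + 1))) (values f b)
    (fun z hz => by
      obtain ⟨j, hj, rfl⟩ := mem_values.1 hz
      exact hmin j (by omega) (by omega))
    (fun z hz => by
      obtain ⟨j, hj, rfl⟩ := mem_values.1 hz
      exact hmin _ (by omega) (by omega))
    (fun z hz => by
      obtain ⟨j, hj, rfl⟩ := mem_values.1 hz
      rw [hfg j (by omega) (by omega)]
      exact hmax j (by omega) (by omega))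
    (fun z hz => by
      obtain ⟨j, hj, rfl⟩ := mem_values.1 hz
      rw [hfg _ (by omega) (by omega)]
      exact hmax _ (by omega) (by omega))
    (by rw [length_values, length_values]; omega)
  rwa [length_values] at this

/-! ### The rotation orbit -/

/-- The representative of `k (j + 1) - 1` modulo `n` in the window `[i, i + n)`. -/
def orbit (n k : ℕ) (i : ℕ) (j : ℕ) : ℤ := i + ((k : ℤ) * (j + 1) - 1 - i) % n

section Orbit

variable {n k : ℕ}

theorem le_orbit (hn : 1 ≤ n) (i j : ℕ) : (i : ℤ) ≤ orbit n k i j := by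
  have := Int.emod_nonneg ((k : ℤ) * (j + 1) - 1 - i) (show (n : ℤ) ≠ 0 by omega)
  unfold orbit
  omega

theorem orbit_lt (hn : 1 ≤ n) (i j : ℕ) : orbit n k i j < i + n := by
  have := Int.emod_lt_of_pos ((k : ℤ) * (j + 1) - 1 - i) (show (0 : ℤ) < n by omega)
  unfold orbit
  omega

theorem dvd_orbit_sub (i j : ℕ) : (n : ℤ) ∣ orbit n k i j - (k * (j + 1) - 1) :=
  ⟨-(((k : ℤ) * (j + 1) - 1 - i) / n), by rw [orbit, Int.emod_def]; ring⟩

theorem orbit_eq {i j : ℕ} {v : ℤ} (h1 : (i : ℤ) ≤ v) (h2 : v < i + n)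
    (h3 : (n : ℤ) ∣ v - (k * (j + 1) - 1)) : orbit n k i j = v := by
  have hn : 1 ≤ n := by omega
  have h4 := le_orbit (k := k) hn i j
  have h5 := orbit_lt (k := k) hn i j
  have h6 : (n : ℤ) ∣ orbit n k i j - v := by
    simpa using dvd_sub (dvd_orbit_sub (n := n) (k := k) i j) h3
  have := Int.eq_zero_of_abs_lt_dvd h6 (by rw [abs_lt]; constructor <;> omega)
  omega

theorem eq_of_dvd_mul_sub (hcop : Nat.Coprime n k) {b c : ℕ} (hb : b < n) (hc : c < n)
    (h : (n : ℤ) ∣ k * ((b : ℤ) - c)) : b = c := by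
  have h1 : (n : ℤ) ∣ (b : ℤ) - c :=
    (Nat.isCoprime_iff_coprime.2 hcop).dvd_of_dvd_mul_left h
  have := Int.eq_zero_of_abs_lt_dvd h1 (by rw [abs_lt]; constructor <;> omega)
  omega

theorem orbit_injOn (hcop : Nat.Coprime n k) {i b c : ℕ} (hb : b < n) (hc : c < n)
    (h : orbit n k i b = orbit n k i c) : b = c := by
  refine eq_of_dvd_mul_sub hcop hb hc ?_
  obtain ⟨x, hx⟩ := dvd_orbit_sub (n := n) (k := k) i b
  obtain ⟨y, hy⟩ := dvd_orbit_sub (n := n) (k := k) i c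
  exact ⟨y - x, by linear_combination h + hy - hx⟩

theorem orbit_step (hcop : Nat.Coprime n k) {i b : ℕ} (hb : b < n)
    (hdvd : (n : ℤ) ∣ (k : ℤ) * (b + 1) - 1 - i) :
    delta n * permBraid n (values (orbit n k i) n) =
      permBraid n (values (orbit n k (i + 1)) n) * U n (b + 1) := by
  have hn : 1 ≤ n := by omega
  obtain ⟨x, hx⟩ := hdvd
  have e1 : orbit n k i b = i :=
    orbit_eq le_rfl (by omega) ⟨-x, by linear_combination -hx⟩
  have e2 : orbit n k (i + 1) b = i + n :=
    orbit_eq (by push_cast; omega) (by push_cast; omega)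
      ⟨1 - x, by linear_combination -hx⟩
  have hne : ∀ j < n, j ≠ b → (i : ℤ) < orbit n k i j := fun j hj hjb =>
    lt_of_le_of_ne (le_orbit hn i j) fun h => hjb (orbit_injOn hcop hj hb (by rw [e1, ← h]))
  have he : ∀ j < n, j ≠ b → orbit n k i j = orbit n k (i + 1) j := fun j hj hjb =>
    (orbit_eq (by push_cast; exact hne j hj hjb)
      (by have := orbit_lt (k := k) hn i j; push_cast; omega) (dvd_orbit_sub i j)).symm
  refine delta_mul_permBraid_values hb he (fun j hj hjb => ?_) (fun j hj hjb => ?_)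
  · rw [e1]
    exact hne j hj hjb
  · rw [e2, ← he j hj hjb]
    exact orbit_lt hn i j

theorem permBraid_orbit_self (n k : ℕ) :
    permBraid n (values (orbit n k n) n) = permBraid n (values (orbit n k 0) n) := by
  rw [← permBraid_map_add n n (values (orbit n k 0) n), ← values_add_const]
  congr 2
  ext j
  simp [orbit]

theorem permBraid_orbit_slope (hcop : Nat.Coprime n k) (hn : 1 ≤ n) :
    permBraid n (values (orbit n k k) n) = permBraid n (values (orbit n k 0) n) * delta n := by
  obtain ⟨N, rfl⟩ : ∃ N, n = N + 1 := ⟨n - 1, by omega⟩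
  have hlast : orbit (N + 1) k 0 N = N :=
    orbit_eq (by simp) (by push_cast; omega) ⟨1 - k, by push_cast; ring⟩
  have hfirst : orbit (N + 1) k k 0 = k + N :=
    orbit_eq (by omega) (by push_cast; omega) ⟨1, by push_cast; ring⟩
  have hshift (j : ℕ) : orbit (N + 1) k k (1 + j) = k + orbit (N + 1) k 0 j := by
    simp only [orbit]
    push_cast
    ring_nf
  have hmax : ∀ z ∈ values (orbit (N + 1) k 0) N, z < N := by
    intro z hz
    obtain ⟨j, hj, rfl⟩ := mem_values.1 hz
    have h1 := orbit_lt (n := N + 1) (k := k) (by omega) 0 j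
    have h2 : orbit (N + 1) k 0 j ≠ N := fun h => by
      have := orbit_injOn hcop (i := 0) (b := j) (c := N) (by omega) (by omega) (by rw [h, hlast])
      omega
    push_cast at h1
    omega
  have h0 : permBraid (N + 1) (values (orbit (N + 1) k 0) (N + 1)) =
      permBraid (N + 1) (values (orbit (N + 1) k 0) N) := by
    rw [values, hlast]
    simpa [desc] using permBraid_insert_max (N + 1) N [] (values (orbit (N + 1) k 0) N) hmax
  have h1 : values (orbit (N + 1) k k) (N + 1) =
      (values (orbit (N + 1) k 0) N).map ((k : ℤ) + ·) ++ [(k : ℤ) + N] := by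
    rw [add_comm N 1, values_add, ← values_add_const, add_comm 1 N]
    simp only [hshift]
    simp [values, hfirst]
  rw [h1, h0, permBraid_insert_max _ _ _ _ (by simp) (by simpa using hmax), List.append_nil,
    permBraid_map_add, delta_eq_desc (by omega)]
  simp [length_values]

theorem delta_pow_mul_permBraid (hcop : Nat.Coprime n k) {β : ℕ → ℕ} (hβn : ∀ i, β i < n)
    (hβ : ∀ i : ℕ, (n : ℤ) ∣ (k : ℤ) * (β i + 1) - 1 - i) (t : ℕ) :
    delta n ^ t * permBraid n (values (orbit n k 0) n) =
      permBraid n (values (orbit n k t) n) *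
        ((List.range t).reverse.map fun i => U n (β i + 1)).prod := by
  induction t with
  | zero => simp
  | succ t ih =>
    rw [pow_succ', mul_assoc, ih, ← mul_assoc, orbit_step hcop (hβn t) (hβ t)]
    simp [List.range_succ, mul_assoc]

theorem exists_orbit_min (hcop : Nat.Coprime n k) (hn : 1 ≤ n) (i : ℕ) :
    ∃ b < n, (n : ℤ) ∣ (k : ℤ) * (b + 1) - 1 - i := by
  obtain ⟨u, v, huv⟩ := Nat.isCoprime_iff_coprime.2 hcop
  have h0 := Int.emod_nonneg (v * (1 + i) - 1) (show (n : ℤ) ≠ 0 by omega)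
  have h1 := Int.emod_lt_of_pos (v * (1 + i) - 1) (show (0 : ℤ) < n by omega)
  refine ⟨((v * (1 + i) - 1) % n).toNat, by omega, ?_⟩
  rw [Int.toNat_of_nonneg h0, Int.emod_def]
  exact ⟨-(k * ((v * (1 + i) - 1) / n)) - u * (1 + i), by linear_combination (1 + (i : ℤ)) * huv⟩

/-- A product of commuting `U`s over a repetition-free list of indices covered by another list
of the same length. -/
theorem prod_U_eq {A B : List ℕ} (hA : ∀ a ∈ A, a < n) (hB : B.Nodup) (hBA : B ⊆ A)
    (hlen : A.length ≤ B.length) :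
    (A.map fun i => U n (i + 1)).prod = (B.map fun i => U n (i + 1)).prod := by
  have hp : B.Perm A := (List.Nodup.subperm hB hBA).perm_of_length_le hlen
  refine (hp.symm.map _).prod_eq' (List.pairwise_of_forall_mem_list ?_)
  simp only [List.mem_map]
  rintro _ ⟨a, ha, rfl⟩ _ ⟨b, hb, rfl⟩
  exact U_commute (hA a ha) (hA b hb)

end Orbit

end BraidGroup

/-- If `n, s` are relatively prime with `2 ≤ n < s` and `s = n·m + k` with `m ≥ 1`,
`1 ≤ k ≤ n-1`, then in `B n` the element `δ^s` is conjugate to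
`δ · (U_2 U_3 ⋯ U_n)^m · U_{a_1} ⋯ U_{a_{k-1}}` where `a_i = ⌈n·i/k⌉`. -/
theorem delta_pow_s_conj (n s m k : ℕ) (hn : 2 ≤ n) (hns : n < s)
    (hcop : Nat.Coprime n s) (hs : s = n * m + k) (hm : 1 ≤ m) (hk1 : 1 ≤ k)
    (hkn : k ≤ n - 1)
    (a : ℕ → ℕ) (ha : ∀ i, 1 ≤ i → i ≤ k - 1 → (a i : ℤ) = ⌈((n : ℚ) * i) / k⌉) :
    ∃ x : BraidGroup n,
      x⁻¹ * (BraidGroup.delta n) ^ s * x =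
        BraidGroup.delta n *
          (((List.range (n - 1)).map (fun j => BraidGroup.U n (j + 2))).prod) ^ m *
          ((List.range (k - 1)).map (fun j => BraidGroup.U n (a (j + 1)))).prod := by
  have hck : Nat.Coprime n k := by
    rw [hs] at hcop
    simpa using hcop
  obtain ⟨β, hβn, hβ⟩ : ∃ β : ℕ → ℕ, (∀ i, β i < n) ∧
      ∀ i : ℕ, (n : ℤ) ∣ (k : ℤ) * (β i + 1) - 1 - i := by
    choose β h1 h2 using BraidGroup.exists_orbit_min hck (by omega)
    exact ⟨β, h1, h2⟩
  have hβ_eq : ∀ i b : ℕ, b < n → (n : ℤ) ∣ (k : ℤ) * (b + 1) - 1 - i → β i = b := by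
    intro i b hb hd
    obtain ⟨x, hx⟩ := hβ i
    obtain ⟨y, hy⟩ := hd
    exact BraidGroup.eq_of_dvd_mul_sub hck (hβn i) hb ⟨x - y, by linear_combination hx - hy⟩
  have haq : ∀ q, 1 ≤ q → q ≤ k - 1 → n * q < k * a q ∧ k * a q < n * q + k := by
    intro q h1 h2
    have hk0 : (0 : ℚ) < k := by exact_mod_cast hk1
    obtain ⟨hlo, hhi⟩ := Int.ceil_eq_iff.1 (ha q h1 h2).symm
    rw [lt_div_iff₀ hk0] at hlo
    rw [div_le_iff₀ hk0] at hhi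
    push_cast at hlo hhi
    have hlo' : k * a q < n * q + k := by
      have : (k * a q : ℚ) < n * q + k := by linarith
      exact_mod_cast this
    have hhi' : n * q ≤ k * a q := by
      have : (n * q : ℚ) ≤ k * a q := by linarith
      exact_mod_cast this
    refine ⟨lt_of_le_of_ne hhi' fun h => ?_, hlo'⟩
    have hd : k ∣ q := hck.symm.dvd_of_dvd_mul_left ⟨a q, h⟩
    have := Nat.le_of_dvd (by omega) hd
    omega
  have ha1 : ∀ q, 1 ≤ q → q ≤ k - 1 → 1 < a q ∧ a q ≤ n := by
    intro q h1 h2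
    obtain ⟨h3, h4⟩ := haq q h1 h2
    constructor <;> by_contra! h
    · have : k * a q ≤ k * 1 := Nat.mul_le_mul_left k h
      have : n * 1 ≤ n * q := Nat.mul_le_mul_left n h1
      omega
    · have : n * (q + 1) ≤ n * k := Nat.mul_le_mul_left n (by omega)
      have : k * (n + 1) ≤ k * a q := Nat.mul_le_mul_left k h
      nlinarith
  have hU : ∀ q < k - 1, BraidGroup.U n (a (q + 1)) = BraidGroup.U n (a (q + 1) - 1 + 1) := by
    intro q hq
    rw [Nat.sub_add_cancel (ha1 (q + 1) (by omega) (by omega)).1.le]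
  have hU1 : BraidGroup.U n (0 + 1) = 1 := by simp [BraidGroup.U_succ, BraidGroup.desc,
    BraidGroup.asc]
  have hfull : ((List.range n).reverse.map fun i => BraidGroup.U n (β i + 1)).prod =
      ((List.range (n - 1)).map (fun j => BraidGroup.U n (j + 2))).prod := by
    have h := BraidGroup.prod_U_eq (n := n) (A := (List.range n).reverse.map β)
      (B := List.range n) (by simpa using fun i _ => hβn i) List.nodup_range ?_ (by simp)
    · rw [List.map_map] at h
      refine h.trans ?_
      obtain ⟨N, rfl⟩ : ∃ N, n = N + 1 := ⟨n - 1, by omega⟩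
      rw [List.range_succ_eq_map, List.map_cons, List.prod_cons, hU1, one_mul, List.map_map]
      rfl
    · intro b hb
      rw [List.mem_range] at hb
      have h0 := Int.emod_nonneg ((k : ℤ) * (b + 1) - 1) (show (n : ℤ) ≠ 0 by omega)
      have h1 := Int.emod_lt_of_pos ((k : ℤ) * (b + 1) - 1) (show (0 : ℤ) < n by omega)
      simp only [List.mem_map, List.mem_reverse, List.mem_range]
      refine ⟨(((k : ℤ) * (b + 1) - 1) % n).toNat, by omega, hβ_eq _ b hb ?_⟩
      rw [Int.toNat_of_nonneg h0]
      exact Int.dvd_self_sub_emod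
  have hpart : ((List.range k).reverse.map fun i => BraidGroup.U n (β i + 1)).prod =
      ((List.range (k - 1)).map (fun j => BraidGroup.U n (a (j + 1)))).prod := by
    have h := BraidGroup.prod_U_eq (n := n) (A := (List.range k).reverse.map β)
      (B := 0 :: (List.range (k - 1)).map fun j => a (j + 1) - 1)
      (by simpa using fun i _ => hβn i) ?_ ?_ (by simp; omega)
    · rw [List.map_map, List.map_cons, List.prod_cons, hU1, one_mul, List.map_map] at h
      refine h.trans (congrArg List.prod (List.map_congr_left fun q hq => ?_))
      exact (hU q (List.mem_range.1 hq)).symm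
    · rw [List.nodup_cons]
      constructor
      · simp only [List.mem_map, List.mem_range, not_exists, not_and]
        intro q hq
        have := ha1 (q + 1) (by omega) (by omega)
        omega
      · refine List.Nodup.map_on (fun p hp q hq hpq => ?_) List.nodup_range
        rw [List.mem_range] at hp hq
        have p1 := ha1 (p + 1) (by omega) (by omega)
        have q1 := ha1 (q + 1) (by omega) (by omega)
        have p2 := haq (p + 1) (by omega) (by omega)
        have q2 := haq (q + 1) (by omega) (by omega)
        rw [show a (p + 1) = a (q + 1) by omega] at p2
        have hkn' : k < n := by omega
        by_contra hne
        rcases Nat.lt_or_gt_of_ne hne with h | h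
        · have := Nat.mul_le_mul_left n (show p + 1 + 1 ≤ q + 1 by omega)
          nlinarith
        · have := Nat.mul_le_mul_left n (show q + 1 + 1 ≤ p + 1 by omega)
          nlinarith
    · intro b hb
      simp only [List.mem_map, List.mem_reverse, List.mem_range]
      rw [List.mem_cons, List.mem_map] at hb
      rcases hb with rfl | ⟨q, hq, rfl⟩
      · refine ⟨k - 1, by omega, hβ_eq _ 0 (by omega) ⟨0, ?_⟩⟩
        push_cast [Nat.cast_sub hk1]
        ring
      · rw [List.mem_range] at hq
        have h1 := ha1 (q + 1) (by omega) (by omega)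
        obtain ⟨h2, h3⟩ := haq (q + 1) (by omega) (by omega)
        obtain ⟨i, hi⟩ : ∃ i, k * a (q + 1) = n * (q + 1) + 1 + i :=
          Nat.exists_eq_add_of_le h2
        refine ⟨i, by omega, hβ_eq _ _ (by omega) ⟨q + 1, ?_⟩⟩
        have hi' : (k : ℤ) * a (q + 1) = n * (q + 1) + 1 + i := by exact_mod_cast hi
        push_cast [Nat.cast_sub h1.1.le]
        linear_combination hi'
  set W := BraidGroup.permBraid n (BraidGroup.values (BraidGroup.orbit n k 0) n)
  set T := ((List.range (n - 1)).map (fun j => BraidGroup.U n (j + 2))).prod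
  set P := ((List.range (k - 1)).map (fun j => BraidGroup.U n (a (j + 1)))).prod
  have hδn : BraidGroup.delta n ^ n * W = W * T := by
    rw [BraidGroup.delta_pow_mul_permBraid hck hβn hβ, BraidGroup.permBraid_orbit_self, hfull]
  have hδk : BraidGroup.delta n ^ k * W = W * (BraidGroup.delta n * P) := by
    rw [BraidGroup.delta_pow_mul_permBraid hck hβn hβ,
      BraidGroup.permBraid_orbit_slope hck (by omega), hpart, mul_assoc]
  have hδnm : (BraidGroup.delta n ^ n) ^ m * W = W * T ^ m :=
    ((show SemiconjBy W T (BraidGroup.delta n ^ n) from hδn.symm).pow_right m).eq.symm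
  have hTP : Commute T P := by
    refine Commute.list_prod_left _ _ fun x hx => Commute.list_prod_right _ _ fun y hy => ?_
    rw [List.mem_map] at hx hy
    obtain ⟨i, hi, rfl⟩ := hx
    obtain ⟨j, hj, rfl⟩ := hy
    rw [List.mem_range] at hi hj
    have := ha1 (j + 1) (by omega) (by omega)
    rw [hU j hj]
    exact BraidGroup.U_commute (by omega) (by omega)
  refine ⟨W, ?_⟩
  rw [mul_assoc, inv_mul_eq_iff_eq_mul, hs, add_comm, pow_add, pow_mul, mul_assoc, hδnm,
    ← mul_assoc, hδk, mul_assoc, mul_assoc, mul_assoc, (hTP.pow_left m).eq]
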